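/- The sequence 0 → M →(Q) S ⊗_R M →(Ψ) S ⊗_R M →(ev) M → 0 is an exact sequence of S-modules. (This is the affine-local form of the spectral exact sequence: the spectral datum M is recovered, up to twist, as the kernel and cokernel of the operator Ψ = x̄ − x acting on the pullback of the pushforward module.) -/

import Mathlib

/-!
Setup: `R` a commutative ring, `r ≥ 1`, `a₁, …, a_r ∈ R` with `a 0 = 1`,
`P(X) = ∑_{j=0}^{r} a_j X^{r-j} = X^r + a₁ X^{r-1} + ⋯ + a_r`,
`S = R[X]/(P)` with `x` the class of `X`, and `M` an `S`-module.
`S ⊗[R] M` is an `S`-module via the left tensor factor.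
-/

open Polynomial TensorProduct

noncomputable section

variable (R : Type*) [CommRing R] (r : ℕ) (a : ℕ → R)

/-- The polynomial `P(X) = ∑_{j=0}^{r} a_j X^{r-j}`; when `a 0 = 1` this is
`X^r + a₁ X^{r-1} + ⋯ + a_{r-1} X + a_r`. -/
def specPoly : Polynomial R := ∑ j ∈ Finset.range (r + 1), Polynomial.C (a j) * Polynomial.X ^ (r - j)

/-- `S = R[X]/(P)`. -/
abbrev SpecS := AdjoinRoot (specPoly R r a)

/-- `x ∈ S`, the class of `X`. -/
def specX : SpecS R r a := AdjoinRoot.root _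

variable (M : Type*) [AddCommGroup M] [Module R M] [Module (SpecS R r a) M]
  [IsScalarTower R (SpecS R r a) M]

/-- `ev : S ⊗_R M → M`, `p ⊗ m ↦ p • m`. -/
def specEv : SpecS R r a ⊗[R] M →ₗ[SpecS R r a] M :=
  LinearMap.liftBaseChange _ LinearMap.id

/-- `Ψ : S ⊗_R M → S ⊗_R M`, `q ⊗ m ↦ q ⊗ (x • m) − (x * q) ⊗ m`. -/
def specPsi : SpecS R r a ⊗[R] M →ₗ[SpecS R r a] SpecS R r a ⊗[R] M :=
  LinearMap.baseChange (SpecS R r a)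
      ((LinearMap.lsmul (SpecS R r a) M (specX R r a)).restrictScalars R)
    - LinearMap.lsmul (SpecS R r a) (SpecS R r a ⊗[R] M) (specX R r a)

/-- `Q : M → S ⊗_R M`,
`Q(m) = ∑_{i=0}^{r−1} x^i ⊗ ( ∑_{j=0}^{r−1−i} a_j x^{r−1−i−j} ) • m`. -/
def specQ (m : M) : SpecS R r a ⊗[R] M :=
  ∑ i ∈ Finset.range r,
    ((specX R r a) ^ i) ⊗ₜ[R]
      ((∑ j ∈ Finset.range (r - i),
          algebraMap R (SpecS R r a) (a j) * (specX R r a) ^ (r - 1 - i - j)) • m)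


variable {R r a M}

lemma specPoly_eq (ha : a 0 = 1) : specPoly R r a =
    X ^ r + ∑ j ∈ Finset.range r, C (a (j + 1)) * X ^ (r - (j + 1)) := by
  rw [specPoly, Finset.sum_range_succ']
  simp [ha, add_comm]

lemma specPoly_rest_degree :
    (∑ j ∈ Finset.range r, C (a (j + 1)) * X ^ (r - (j + 1)) : R[X]).degree < r := by
  rw [← Polynomial.mem_degreeLT]
  refine Submodule.sum_mem _ fun j hj => ?_
  rw [Polynomial.mem_degreeLT]
  refine (Polynomial.degree_C_mul_X_pow_le _ _).trans_lt ?_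
  have := Finset.mem_range.1 hj
  exact_mod_cast (by omega : r - (j + 1) < r)

lemma specPoly_monic (ha : a 0 = 1) : (specPoly R r a).Monic := by
  rw [specPoly_eq ha]
  exact monic_X_pow_add specPoly_rest_degree

lemma specPoly_degree [Nontrivial R] (ha : a 0 = 1) : (specPoly R r a).degree = r := by
  rw [specPoly_eq ha, degree_add_eq_left_of_degree_lt, degree_X_pow]
  rw [degree_X_pow]
  exact specPoly_rest_degree

/-- The k-th coefficient map on the tensor product. -/
def specCoef (ha : a 0 = 1) (M : Type*) [AddCommGroup M] [Module R M] (k : ℕ) :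
    SpecS R r a ⊗[R] M →ₗ[R] M :=
  (TensorProduct.lid R M).toLinearMap ∘ₗ
    LinearMap.rTensor M ((Polynomial.lcoeff R k) ∘ₗ
      (AdjoinRoot.modByMonicHom (specPoly_monic (r := r) ha)))

lemma specCoef_tmul (ha : a 0 = 1) (k i : ℕ) (hi : i < r) (m : M) :
    specCoef (r := r) ha M k ((specX R r a ^ i) ⊗ₜ[R] m) = if k = i then m else 0 := by
  rcases subsingleton_or_nontrivial R with _ | _
  · have := Module.subsingleton R M
    exact Subsingleton.elim _ _
  have h : AdjoinRoot.modByMonicHom (specPoly_monic (r := r) ha) (specX R r a ^ i) = X ^ i := by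
    rw [specX, ← AdjoinRoot.mk_X, ← map_pow, AdjoinRoot.modByMonicHom_mk,
      Polynomial.modByMonic_eq_self_iff (specPoly_monic ha), specPoly_degree ha, degree_X_pow]
    exact_mod_cast hi
  simp only [specCoef, LinearMap.comp_apply, LinearMap.rTensor_tmul, h]
  simp [Polynomial.coeff_X_pow]

lemma spec_repr (ha : a 0 = 1) (z : SpecS R r a ⊗[R] M) :
    ∃ m : ℕ → M, z = ∑ i ∈ Finset.range r, (specX R r a ^ i) ⊗ₜ[R] m i := by
  rcases subsingleton_or_nontrivial R with _ | _
  · have := Module.subsingleton R (SpecS R r a ⊗[R] M)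
    exact ⟨0, Subsingleton.elim _ _⟩
  induction z with
  | zero => exact ⟨0, by simp⟩
  | add z w hz hw =>
    obtain ⟨f, rfl⟩ := hz
    obtain ⟨g, rfl⟩ := hw
    exact ⟨f + g, by simp [TensorProduct.tmul_add, Finset.sum_add_distrib]⟩
  | tmul p m =>
    obtain ⟨p, rfl⟩ := AdjoinRoot.mk_surjective p
    refine ⟨fun i => (p %ₘ specPoly R r a).coeff i • m, ?_⟩
    have h1 : AdjoinRoot.mk (specPoly R r a) p =
        AdjoinRoot.mk (specPoly R r a) (p %ₘ specPoly R r a) := by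
      conv_lhs => rw [← Polynomial.modByMonic_add_div p (specPoly R r a)]
      simp
    have h2 : (p %ₘ specPoly R r a).degree < r := by
      rw [← specPoly_degree (r := r) ha]
      exact Polynomial.degree_modByMonic_lt _ (specPoly_monic ha)
    rw [h1]
    generalize p %ₘ specPoly R r a = q at h2
    have h3 : q = ∑ i ∈ Finset.range r, C (q.coeff i) * X ^ i := by
      ext k
      simp only [finsetSum_coeff, coeff_C_mul_X_pow, Finset.sum_ite_eq, Finset.mem_range]
      split_ifs with h
      · rfl
      · exact coeff_eq_zero_of_degree_lt (h2.trans_le (by exact_mod_cast not_lt.1 h))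
    conv_lhs => rw [h3]
    simp only [map_sum, map_mul, map_pow, AdjoinRoot.mk_X, AdjoinRoot.mk_C,
      TensorProduct.sum_tmul, TensorProduct.tmul_smul]
    refine Finset.sum_congr rfl fun i _ => ?_
    rw [TensorProduct.smul_tmul', Algebra.smul_def]
    rfl

lemma specPsi_tmul (q : SpecS R r a) (m : M) : specPsi R r a M (q ⊗ₜ[R] m) =
    q ⊗ₜ[R] (specX R r a • m) - (specX R r a * q) ⊗ₜ[R] m := by
  simp [specPsi, TensorProduct.smul_tmul']

lemma specEv_tmul (q : SpecS R r a) (m : M) : specEv R r a M (q ⊗ₜ[R] m) = q • m := by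
  simp [specEv]

/-- The coefficients of Q. -/
def specC (R : Type*) [CommRing R] (r : ℕ) (a : ℕ → R) (i : ℕ) : SpecS R r a :=
  ∑ j ∈ Finset.range (r - i), algebraMap R (SpecS R r a) (a j) * (specX R r a) ^ (r - 1 - i - j)

lemma specQ_eq (m : M) : specQ R r a M m =
    ∑ i ∈ Finset.range r, ((specX R r a) ^ i) ⊗ₜ[R] (specC R r a i • m) := rfl

lemma specC_rec (i : ℕ) (hi : i + 1 ≤ r) : specC R r a i =
    specX R r a * specC R r a (i + 1) + algebraMap R _ (a (r - (i + 1))) := by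
  obtain ⟨k, rfl⟩ := Nat.exists_eq_add_of_le' hi
  unfold specC
  rw [show k + (i + 1) - i = k + 1 by omega, show k + (i + 1) - (i + 1) = k by omega,
    Finset.sum_range_succ, Finset.mul_sum]
  congr 1
  · refine Finset.sum_congr rfl fun j hj => ?_
    have := Finset.mem_range.1 hj
    rw [show k + (i + 1) - 1 - i - j = (k + (i + 1) - 1 - (i + 1) - j) + 1 by omega, pow_succ]
    ring
  · simp [show k + (i + 1) - 1 - i - k = 0 by omega]

lemma spec_root : ∑ j ∈ Finset.range (r + 1),
    algebraMap R (SpecS R r a) (a j) * (specX R r a) ^ (r - j) = 0 := by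
  have h : AdjoinRoot.mk (specPoly R r a) (specPoly R r a) = 0 := AdjoinRoot.mk_self
  conv_lhs at h => arg 2; rw [specPoly]
  simpa [specX] using h

lemma specC_zero (hr : 1 ≤ r) :
    specX R r a * specC R r a 0 + algebraMap R _ (a r) = 0 := by
  rw [← spec_root, Finset.sum_range_succ, specC, Finset.mul_sum]
  congr 1
  · refine Finset.sum_congr rfl fun j hj => ?_
    have := Finset.mem_range.1 hj
    rw [show r - j = (r - 1 - 0 - j) + 1 by omega, pow_succ]
    ring
  · simp

lemma specPsi_specQ_aux (m : M) (n : ℕ) (hn : n + 1 ≤ r) :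
    specPsi R r a M (∑ i ∈ Finset.range (n + 1), (specX R r a ^ i) ⊗ₜ[R] (specC R r a i • m)) =
    - (specX R r a ^ (n + 1)) ⊗ₜ[R] (specC R r a n • m)
    - (∑ i ∈ Finset.range (n + 1),
        algebraMap R (SpecS R r a) (a (r - i)) * specX R r a ^ i) ⊗ₜ[R] m := by
  induction n with
  | zero =>
    have h := eq_neg_of_add_eq_zero_left (specC_zero (R := R) (a := a) hn)
    simp only [zero_add, Finset.sum_range_one, specPsi_tmul, smul_smul, h, pow_zero, pow_one,
      mul_one, Nat.sub_zero, neg_smul, algebraMap_smul, TensorProduct.tmul_neg,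
      TensorProduct.tmul_smul, TensorProduct.smul_tmul', Algebra.smul_def, TensorProduct.neg_tmul]
    abel
  | succ n ih =>
    rw [Finset.sum_range_succ, map_add, ih (by omega), specPsi_tmul, smul_smul,
      Finset.sum_range_succ _ (n + 1), specC_rec n (by omega), add_smul, algebraMap_smul,
      TensorProduct.tmul_add, TensorProduct.add_tmul, TensorProduct.tmul_smul (a (r - (n + 1))),
      TensorProduct.smul_tmul', ← Algebra.smul_def, pow_succ' _ (n + 1)]
    abel

lemma specC_last (hr : 1 ≤ r) (ha : a 0 = 1) : specC R r a (r - 1) = 1 := by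
  simp [specC, show r - (r - 1) = 1 by omega, ha]

lemma specPsi_specQ (hr : 1 ≤ r) (ha : a 0 = 1) (m : M) :
    specPsi R r a M (specQ R r a M m) = 0 := by
  obtain ⟨s, rfl⟩ := Nat.exists_eq_add_of_le' hr
  rw [specQ_eq, specPsi_specQ_aux m s le_rfl]
  have h := specC_last hr ha
  simp only [Nat.add_sub_cancel] at h
  rw [h, one_smul, ← neg_add', ← TensorProduct.add_tmul]
  have h2 := spec_root (R := R) (r := s + 1) (a := a)
  rw [← Finset.sum_range_reflect, Finset.sum_range_succ] at h2
  have h3 : ∀ i ∈ Finset.range (s + 1),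
      algebraMap R (SpecS R (s + 1) a) (a (s + 1 + 1 - 1 - i)) *
        specX R (s + 1) a ^ (s + 1 - (s + 1 + 1 - 1 - i)) =
      algebraMap R (SpecS R (s + 1) a) (a (s + 1 - i)) * specX R (s + 1) a ^ i := by
    intro i hi
    have := Finset.mem_range.1 hi
    rw [show s + 1 + 1 - 1 - i = s + 1 - i by omega, show s + 1 - (s + 1 - i) = i by omega]
  rw [Finset.sum_congr rfl h3] at h2
  simp only [Nat.add_sub_cancel, Nat.sub_self, ha, map_one, one_mul, Nat.sub_zero] at h2
  rw [add_comm (specX R (s + 1) a ^ (s + 1)), h2]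
  simp

lemma specQ_add (m n : M) : specQ R r a M (m + n) = specQ R r a M m + specQ R r a M n := by
  simp [specQ_eq, TensorProduct.tmul_add, Finset.sum_add_distrib]

lemma specQ_x (hr : 1 ≤ r) (ha : a 0 = 1) (m : M) :
    specQ R r a M (specX R r a • m) = specX R r a • specQ R r a M m := by
  have h := specPsi_specQ hr ha m
  rw [specQ_eq, map_sum] at h
  simp only [specPsi_tmul, Finset.sum_sub_distrib, sub_eq_zero] at h
  rw [specQ_eq, specQ_eq, Finset.smul_sum]
  simp only [TensorProduct.smul_tmul', smul_eq_mul]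
  rw [← h]
  exact Finset.sum_congr rfl fun i _ => by rw [smul_comm]

lemma spec_induction {p : SpecS R r a → Prop} (q : SpecS R r a)
    (hC : ∀ c : R, p (algebraMap R _ c)) (hadd : ∀ q q', p q → p q' → p (q + q'))
    (hx : ∀ q, p q → p (specX R r a * q)) : p q := by
  obtain ⟨q, rfl⟩ := AdjoinRoot.mk_surjective q
  induction q using Polynomial.induction_on with
  | C c => exact hC c
  | add q q' h h' => rw [map_add]; exact hadd _ _ h h'
  | monomial n c h =>
    have := hx _ h
    rw [specX, ← AdjoinRoot.mk_X, ← map_mul] at this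
    rwa [show C c * X ^ (n + 1) = X * (C c * X ^ n : R[X]) by ring]

lemma specQ_smul (hr : 1 ≤ r) (ha : a 0 = 1) (q : SpecS R r a) (m : M) :
    specQ R r a M (q • m) = q • specQ R r a M m := by
  induction q using spec_induction with
  | hC c =>
    simp only [algebraMap_smul, specQ_eq, Finset.smul_sum]
    exact Finset.sum_congr rfl fun i _ => by
      rw [smul_comm, TensorProduct.tmul_smul]
  | hadd q q' h h' => rw [add_smul, add_smul, specQ_add, h, h']
  | hx q h => rw [mul_smul, specQ_x hr ha, h, mul_smul]

lemma specCoef_sum (ha : a 0 = 1) (n k : ℕ) (hn : n ≤ r) (hk : k < n) (m : ℕ → M) :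
    specCoef (r := r) ha M k (∑ i ∈ Finset.range n, (specX R r a ^ i) ⊗ₜ[R] m i) = m k := by
  rw [map_sum, Finset.sum_congr rfl fun i hi =>
    specCoef_tmul ha k i ((Finset.mem_range.1 hi).trans_le hn) (m i)]
  simp [hk]

lemma specPsi_ker (ha : a 0 = 1) (m : ℕ → M) (n : ℕ) (hn : n < r)
    (h : specPsi R r a M (∑ i ∈ Finset.range n, (specX R r a ^ i) ⊗ₜ[R] m i) = 0) :
    ∑ i ∈ Finset.range n, (specX R r a ^ i) ⊗ₜ[R] m i = 0 := by
  induction n with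
  | zero => simp
  | succ n ih =>
    have h0 : m n = 0 := by
      have h1 := congrArg (specCoef (r := r) ha M (n + 1)) h
      rw [map_sum, map_sum, map_zero, Finset.sum_congr rfl (g := fun i =>
        if n = i then - m i else 0)] at h1
      · simpa using h1
      · intro i hi
        have := Finset.mem_range.1 hi
        rw [specPsi_tmul, map_sub, ← pow_succ', specCoef_tmul ha _ _ (by omega),
          specCoef_tmul ha _ _ (by omega), if_neg (by omega)]
        simp only [Nat.add_right_cancel_iff]
        split_ifs <;> simp
    rw [Finset.sum_range_succ, h0, TensorProduct.tmul_zero, add_zero] at h ⊢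
    exact ih (by omega) h

lemma specEv_specPsi (z : SpecS R r a ⊗[R] M) : specEv R r a M (specPsi R r a M z) = 0 := by
  induction z with
  | zero => simp
  | add z w hz hw => rw [map_add, map_add, hz, hw, add_zero]
  | tmul q m =>
    rw [specPsi_tmul, map_sub, specEv_tmul, specEv_tmul, smul_smul, mul_comm, sub_self]

lemma spec_sub_mem (z : SpecS R r a ⊗[R] M) :
    z - 1 ⊗ₜ[R] specEv R r a M z ∈ LinearMap.range (specPsi R r a M) := by
  induction z with
  | zero => simp
  | add z w hz hw =>
    rw [map_add, TensorProduct.tmul_add, add_sub_add_comm]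
    exact add_mem hz hw
  | tmul q m =>
    rw [specEv_tmul]
    induction q using spec_induction generalizing m with
    | hC c =>
      rw [algebraMap_smul, TensorProduct.tmul_smul, TensorProduct.smul_tmul', Algebra.smul_def,
        mul_one, sub_self]
      exact zero_mem _
    | hadd q q' h h' =>
      rw [TensorProduct.add_tmul, add_smul, TensorProduct.tmul_add, add_sub_add_comm]
      exact add_mem (h m) (h' m)
    | hx q h =>
      have h1 := sub_mem (h (specX R r a • m)) (LinearMap.mem_range_self (specPsi R r a M) (q ⊗ₜ[R] m))
      rw [specPsi_tmul, smul_smul, mul_comm q] at h1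
      convert h1 using 1
      abel

variable (R r a M)

/-- The sequence `0 → M →(Q) S ⊗_R M →(Ψ) S ⊗_R M →(ev) M → 0` is an exact sequence of
`S`-modules: `Q` is `S`-linear and injective, `ker Ψ = im Q`, `ker ev = im Ψ`, and `ev` is
surjective. -/
theorem statement_0 (hr : 1 ≤ r) (ha : a 0 = 1) :
    IsLinearMap (SpecS R r a) (specQ R r a M) ∧
    Function.Injective (specQ R r a M) ∧
    Function.Exact (specQ R r a M) (specPsi R r a M) ∧
    Function.Exact (specPsi R r a M) (specEv R r a M) ∧
    Function.Surjective (specEv R r a M) := by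
  refine ⟨⟨specQ_add, specQ_smul hr ha⟩, ?_, ?_, ?_, ?_⟩
  · intro m n h
    have h1 := congrArg (specCoef (r := r) ha M (r - 1)) h
    rw [specQ_eq, specQ_eq, specCoef_sum ha r (r - 1) le_rfl (by omega),
      specCoef_sum ha r (r - 1) le_rfl (by omega), specC_last hr ha, one_smul, one_smul] at h1
    exact h1
  · intro z
    constructor
    · intro hz
      obtain ⟨m, rfl⟩ := spec_repr ha z
      refine ⟨m (r - 1), ?_⟩
      have key : ∑ i ∈ Finset.range r, (specX R r a ^ i) ⊗ₜ[R] m i - specQ R r a M (m (r - 1)) =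
          ∑ i ∈ Finset.range (r - 1),
            (specX R r a ^ i) ⊗ₜ[R] (m i - specC R r a i • m (r - 1)) := by
        have h0 : (specX R r a ^ (r - 1)) ⊗ₜ[R] (m (r - 1) - specC R r a (r - 1) • m (r - 1)) =
            0 := by
          rw [specC_last hr ha, one_smul, sub_self, TensorProduct.tmul_zero]
        rw [specQ_eq, ← Finset.sum_sub_distrib, ← add_zero (∑ i ∈ Finset.range (r - 1), _), ← h0,
          ← Finset.sum_range_succ (fun i =>
            (specX R r a ^ i) ⊗ₜ[R] (m i - specC R r a i • m (r - 1))),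
          Nat.sub_add_cancel hr]
        exact Finset.sum_congr rfl fun i _ => by rw [TensorProduct.tmul_sub]
      have h2 := specPsi_ker (r := r) ha (fun i => m i - specC R r a i • m (r - 1)) (r - 1) (by omega)
        (by rw [← key, map_sub, hz, specPsi_specQ hr ha, sub_zero])
      rw [← key] at h2
      exact (sub_eq_zero.1 h2).symm
    · rintro ⟨m, rfl⟩
      exact specPsi_specQ hr ha m
  · intro z
    constructor
    · intro hz
      have h := spec_sub_mem z
      rw [hz, TensorProduct.tmul_zero, sub_zero] at h
      exact h
    · rintro ⟨w, rfl⟩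
      exact specEv_specPsi w
  · intro m
    exact ⟨1 ⊗ₜ[R] m, by rw [specEv_tmul, one_smul]⟩
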